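/- Assume that every admissible 50-tuple of distinct integers contains a Dickson pair, i.e., for every admissible 50-tuple (x_1,…,x_50) of distinct integers there exist indices i ≠ j such that there are infinitely many integers n with n + x_i and n + x_j both prime. Then the set of de Polignac numbers has lower density at least (1/49) · ∏_{p ≤ 50, p prime} (1 − 1/p), and this quantity is greater than 1/354. -/

import Mathlib

open Filter

/-- A `k`-tuple of integers is admissible if for every prime `p` its entries
do not cover all residue classes mod `p`. -/
def AdmissibleTuple {k : ℕ} (x : Fin k → ℤ) : Prop :=
  ∀ p : ℕ, p.Prime → ∃ r : ZMod p, ∀ i, (x i : ZMod p) ≠ r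

/-- A de Polignac number: an integer `h` such that there are infinitely many primes `p`
with `p + h` also prime. -/
def DePolignac (h : ℤ) : Prop :=
  {p : ℤ | Prime p ∧ Prime (p + h)}.Infinite

/-- The lower density of a set of integers: `liminf_{x → ∞} |A ∩ [1,x]| / x`. -/
noncomputable def lowerDensity (A : Set ℤ) : ℝ :=
  Filter.liminf (fun x : ℕ => (Nat.card (A ∩ Set.Icc 1 (x : ℤ) : Set ℤ) : ℝ) / x)
    Filter.atTop

/-!
Consider the graph on the integers coprime to every prime at most `k + 1` in which `a` and `b`
are adjacent when `(a, b)` is a Dickson pair, that is, when `b - a` is a de Polignac number. Any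
`k + 1` vertices form an admissible tuple, so no `k + 1` of them are independent, and a maximal
independent set `T` has at most `k` elements. By maximality `T` dominates the graph: each vertex
is the sum of an element of `T` and a de Polignac number. Hence at most `k` translates of the
set of de Polignac numbers cover the coprime integers, whose density is `∏ (1 - 1/p)`, and
translating a set changes its counting function only by a bounded amount.
-/

open SetRel Topology
open scoped Pointwise

section Cover

variable {α : Type*} {R : SetRel α α}

lemma exists_isSeparated_isCover [R.IsRefl] [R.IsSymm] (s : Set α) :
    ∃ t ⊆ s, IsSeparated R t ∧ IsCover R s t := by
  obtain ⟨t, ht⟩ := zorn_subset {t | t ⊆ s ∧ IsSeparated R t} fun c hc hchain =>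
    ⟨⋃₀ c, ⟨Set.sUnion_subset fun t ht => (hc ht).1,
      (Set.pairwise_sUnion hchain.directedOn).2 fun t ht => (hc ht).2⟩,
      fun t ht => Set.subset_sUnion_of_mem ht⟩
  exact ⟨t, ht.prop.1, ht.prop.2, .of_maximal_isSeparated ht⟩

lemma encard_le_of_isSeparated {k : ℕ} {t : Set α} (ht : IsSeparated R t)
    (h : ∀ x : Fin (k + 1) → α, Function.Injective x → (∀ i, x i ∈ t) →
      ∃ i j, i ≠ j ∧ x i ~[R] x j) : t.encard ≤ k := by
  by_contra! hk
  obtain ⟨u, hut, hu⟩ := Set.exists_subset_encard_eq (Order.add_one_le_of_lt hk)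
  have hu' : u.ncard = k + 1 := by simp [Set.ncard, hu]
  have : Finite u := Set.finite_of_ncard_ne_zero (by omega)
  let e : Fin (k + 1) ≃ u := (Finite.equivFinOfCardEq hu').symm
  obtain ⟨i, j, hij, hR⟩ :=
    h (fun i => e i) (Subtype.val_injective.comp e.injective) fun i => hut (e i).2
  exact ht (hut (e i).2) (hut (e j).2) (fun h => hij (e.injective (Subtype.ext h))) hR

lemma exists_finset_isCover_card_le [R.IsRefl] [R.IsSymm] {s : Set α} {k : ℕ}
    (h : ∀ x : Fin (k + 1) → α, Function.Injective x → (∀ i, x i ∈ s) →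
      ∃ i j, i ≠ j ∧ x i ~[R] x j) :
    ∃ T : Finset α, T.card ≤ k ∧ IsCover R s T := by
  obtain ⟨t, hts, hsep, hcover⟩ := exists_isSeparated_isCover (R := R) s
  have hk : t.encard ≤ k :=
    encard_le_of_isSeparated hsep fun x hx hxt => h x hx fun i => hts (hxt i)
  lift t to Finset α using Set.finite_of_encard_le_coe hk
  exact ⟨t, by simpa using hk, hcover⟩

end Cover

section Density

variable {A B S : Set ℤ}

/-- The counting function of a set of integers, `countUpTo A N = |A ∩ [1, N]|`: the lower density is
the lower limit of `countUpTo A N / N`. -/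
noncomputable def countUpTo (A : Set ℤ) (N : ℕ) : ℕ := (A ∩ Set.Icc 1 (N : ℤ)).ncard

lemma lowerDensity_eq_liminf_countUpTo (A : Set ℤ) :
    lowerDensity A = liminf (fun N : ℕ => (countUpTo A N : ℝ) / N) atTop := rfl

lemma finite_inter_Icc (A : Set ℤ) (a b : ℤ) : (A ∩ Set.Icc a b).Finite :=
  (Set.finite_Icc a b).inter_of_right A

lemma ncard_Ioc_int (a b : ℤ) : (Set.Ioc a b).ncard = (b - a).toNat := by
  rw [← Finset.coe_Ioc, Set.ncard_coe_finset, Int.card_Ioc]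

lemma countUpTo_mono (h : A ⊆ B) (N : ℕ) : countUpTo A N ≤ countUpTo B N :=
  Set.ncard_le_ncard (Set.inter_subset_inter_left _ h) (finite_inter_Icc _ _ _)

lemma countUpTo_le (A : Set ℤ) (N : ℕ) : countUpTo A N ≤ N :=
  calc countUpTo A N ≤ (Set.Ioc 0 (N : ℤ)).ncard :=
        Set.ncard_le_ncard (fun _ hy => ⟨by have := hy.2.1; omega, hy.2.2⟩) (Set.finite_Ioc _ _)
    _ = N := by simp [ncard_Ioc_int]

lemma countUpTo_vadd_le (t : ℤ) (A : Set ℤ) (N : ℕ) :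
    countUpTo (t +ᵥ A) N ≤ countUpTo A N + 2 * t.natAbs := by
  set E : Set ℤ := Set.Ioc (-t.natAbs) 0 ∪ Set.Ioc N (N + t.natAbs)
  have hfin : (A ∩ Set.Icc 1 (N : ℤ) ∪ E).Finite :=
    (finite_inter_Icc A _ _).union ((Set.finite_Ioc _ _).union (Set.finite_Ioc _ _))
  have hsub : (t +ᵥ A) ∩ Set.Icc 1 (N : ℤ) ⊆ t +ᵥ (A ∩ Set.Icc 1 (N : ℤ) ∪ E) := by
    rintro _ ⟨⟨a, ha, rfl⟩, h1, hN⟩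
    refine Set.vadd_mem_vadd_set ?_
    simp only [vadd_eq_add] at h1 hN
    simp only [E, Set.mem_union, Set.mem_inter_iff, Set.mem_Icc, Set.mem_Ioc, ha, true_and]
    omega
  have hE : E.ncard ≤ 2 * t.natAbs :=
    (Set.ncard_union_le _ _).trans (by simp only [ncard_Ioc_int]; omega)
  calc countUpTo (t +ᵥ A) N
      ≤ (t +ᵥ (A ∩ Set.Icc 1 (N : ℤ) ∪ E)).ncard := Set.ncard_le_ncard hsub hfin.vadd_set
    _ = (A ∩ Set.Icc 1 (N : ℤ) ∪ E).ncard := Set.ncard_vadd_set _ _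
    _ ≤ countUpTo A N + E.ncard := Set.ncard_union_le _ _
    _ ≤ countUpTo A N + 2 * t.natAbs := by gcongr

lemma countUpTo_biUnion_le {ι : Type*} (T : Finset ι) (A : ι → Set ℤ) (N : ℕ) :
    countUpTo (⋃ t ∈ T, A t) N ≤ ∑ t ∈ T, countUpTo (A t) N := by
  simpa only [countUpTo, Set.iUnion₂_inter] using
    T.set_ncard_biUnion_le fun t => A t ∩ Set.Icc 1 (N : ℤ)

lemma countUpTo_biUnion_vadd_le (T : Finset ℤ) (A : Set ℤ) (N : ℕ) :
    countUpTo (⋃ t ∈ T, (t +ᵥ A)) N ≤ T.card * countUpTo A N + ∑ t ∈ T, 2 * t.natAbs :=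
  calc countUpTo (⋃ t ∈ T, (t +ᵥ A)) N
      ≤ ∑ t ∈ T, countUpTo (t +ᵥ A) N := countUpTo_biUnion_le T _ N
    _ ≤ ∑ t ∈ T, (countUpTo A N + 2 * t.natAbs) :=
        Finset.sum_le_sum fun t _ => countUpTo_vadd_le t A N
    _ = T.card * countUpTo A N + ∑ t ∈ T, 2 * t.natAbs := by
        rw [Finset.sum_add_distrib, Finset.sum_const, smul_eq_mul]

lemma isBoundedUnder_ge_countUpTo_div (A : Set ℤ) :
    IsBoundedUnder (· ≥ ·) atTop fun N : ℕ => (countUpTo A N : ℝ) / N :=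
  isBoundedUnder_of ⟨0, fun _ => by positivity⟩

lemma countUpTo_div_le_one (A : Set ℤ) (N : ℕ) : (countUpTo A N : ℝ) / N ≤ 1 :=
  div_le_one_of_le₀ (by exact_mod_cast countUpTo_le A N) N.cast_nonneg

lemma isCoboundedUnder_ge_countUpTo_div (A : Set ℤ) :
    IsCoboundedUnder (· ≥ ·) atTop fun N : ℕ => (countUpTo A N : ℝ) / N :=
  (isBoundedUnder_of ⟨1, countUpTo_div_le_one A⟩).isCoboundedUnder_ge

lemma le_lowerDensity_of_tendsto {u : ℕ → ℝ} {d : ℝ} (hu : ∀ N, u N ≤ countUpTo A N)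
    (hd : Tendsto (fun N => u N / N) atTop (𝓝 d)) : d ≤ lowerDensity A := by
  rw [← hd.liminf_eq, lowerDensity_eq_liminf_countUpTo]
  exact liminf_le_liminf (.of_forall fun N => by gcongr; exact hu N) hd.isBoundedUnder_ge
    (isCoboundedUnder_ge_countUpTo_div A)

lemma liminf_mul_countUpTo_div (A : Set ℤ) {c : ℝ} (hc : 0 ≤ c) :
    liminf (fun N : ℕ => c * ((countUpTo A N : ℝ) / N)) atTop = c * lowerDensity A :=
  ((monotone_mul_left_of_nonneg hc).map_liminf_of_continuousAt _
    (continuous_const_mul c).continuousAt (isCoboundedUnder_ge_countUpTo_div A)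
    (isBoundedUnder_ge_countUpTo_div A)).symm

lemma lowerDensity_le_mul_of_countUpTo_le {c C : ℝ} (hc : 0 ≤ c)
    (h : ∀ N, (countUpTo S N : ℝ) ≤ c * countUpTo A N + C) :
    lowerDensity S ≤ c * lowerDensity A := by
  let u : ℕ → ℝ := fun N => C / N
  let v : ℕ → ℝ := fun N => c * (countUpTo A N / N)
  have hu : Tendsto u atTop (𝓝 0) := tendsto_const_div_atTop_nhds_zero_nat C
  have hv_ge : IsBoundedUnder (· ≥ ·) atTop v := isBoundedUnder_of ⟨0, fun _ => by positivity⟩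
  have hv_cobdd : IsCoboundedUnder (· ≥ ·) atTop v :=
    IsBoundedUnder.isCoboundedUnder_ge <| isBoundedUnder_of
      ⟨c, fun N => mul_le_of_le_one_right hc (countUpTo_div_le_one A N)⟩
  have huv_cobdd : IsCoboundedUnder (· ≥ ·) atTop (u + v) :=
    isCoboundedUnder_ge_add hu.isBoundedUnder_le hv_cobdd
  have hSuv : ∀ N : ℕ, (countUpTo S N : ℝ) / N ≤ (u + v) N := fun N =>
    calc (countUpTo S N : ℝ) / N ≤ (c * countUpTo A N + C) / N := by gcongr; exact h N
      _ = (u + v) N := by simp only [u, v, Pi.add_apply]; ring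
  calc lowerDensity S = liminf (fun N : ℕ => (countUpTo S N : ℝ) / N) atTop :=
        lowerDensity_eq_liminf_countUpTo S
    _ ≤ liminf (u + v) atTop :=
        liminf_le_liminf (.of_forall hSuv) (isBoundedUnder_ge_countUpTo_div S) huv_cobdd
    _ ≤ limsup u atTop + liminf v atTop :=
        liminf_add_le hu.isBoundedUnder_ge hu.isBoundedUnder_le hv_ge hv_cobdd
    _ = c * lowerDensity A := by rw [hu.limsup_eq, zero_add, liminf_mul_countUpTo_div A hc]

lemma lowerDensity_le_mul_of_subset_biUnion_vadd {k : ℕ} {T : Finset ℤ} (hT : T.card ≤ k)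
    (hS : S ⊆ ⋃ t ∈ T, (t +ᵥ A)) : lowerDensity S ≤ k * lowerDensity A := by
  refine lowerDensity_le_mul_of_countUpTo_le (C := ∑ t ∈ T, 2 * t.natAbs) k.cast_nonneg fun N => ?_
  have hcount : countUpTo S N ≤ k * countUpTo A N + ∑ t ∈ T, 2 * t.natAbs :=
    calc countUpTo S N ≤ countUpTo (⋃ t ∈ T, (t +ᵥ A)) N := countUpTo_mono hS N
      _ ≤ T.card * countUpTo A N + ∑ t ∈ T, 2 * t.natAbs := countUpTo_biUnion_vadd_le T A N
      _ ≤ k * countUpTo A N + ∑ t ∈ T, 2 * t.natAbs := by gcongr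
  exact_mod_cast hcount

theorem lowerDensity_le_mul_of_exists_sub_mem {k : ℕ} (hzero : 0 ∈ A) (hneg : ∀ a ∈ A, -a ∈ A)
    (h : ∀ x : Fin (k + 1) → ℤ, Function.Injective x → (∀ i, x i ∈ S) →
      ∃ i j, i ≠ j ∧ x i - x j ∈ A) :
    lowerDensity S ≤ k * lowerDensity A := by
  let R : SetRel ℤ ℤ := {p | p.1 - p.2 ∈ A}
  have : R.IsRefl := ⟨fun a => by simpa [R] using hzero⟩
  have : R.IsSymm := ⟨fun a b hab => by simpa [R] using hneg _ hab⟩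
  obtain ⟨T, hTk, hT⟩ := exists_finset_isCover_card_le (R := R) h
  refine lowerDensity_le_mul_of_subset_biUnion_vadd hTk fun y hy => ?_
  obtain ⟨t, ht, hyt⟩ := hT hy
  exact Set.mem_biUnion ht ⟨y - t, hyt, add_sub_cancel t y⟩

end Density

section Coprime

lemma card_filter_coprime_Ico_mul (a n q : ℕ) :
    ((Finset.Ico n (n + a * q)).filter a.Coprime).card = a.totient * q := by
  induction q with
  | zero => simp
  | succ q ih =>
    rw [mul_add_one, ← add_assoc, ← Finset.Ico_union_Ico_eq_Ico (b := n + a * q) (by omega)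
      (by omega), Finset.filter_union, Finset.card_union_of_disjoint
        (Finset.disjoint_filter_filter (Finset.Ico_disjoint_Ico_consecutive _ _ _)), ih,
      Nat.filter_coprime_Ico_eq_totient, mul_add_one]

lemma totient_mul_div_le_countUpTo_isCoprime (a N : ℕ) :
    a.totient * (N / a) ≤ countUpTo {y | IsCoprime y (a : ℤ)} N := by
  rw [← card_filter_coprime_Ico_mul a 1, ← Set.ncard_coe_finset,
    ← Set.ncard_image_of_injective _ (Nat.cast_injective (R := ℤ))]
  refine Set.ncard_le_ncard ?_ (finite_inter_Icc _ _ _)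
  rintro _ ⟨n, hn, rfl⟩
  obtain ⟨hIco, hcop⟩ := Finset.mem_filter.1 hn
  obtain ⟨h1, hlt⟩ := Finset.mem_Ico.1 hIco
  have hdiv : a * (N / a) ≤ N := Nat.mul_div_le N a
  exact ⟨Nat.isCoprime_iff_coprime.2 hcop.symm, by exact_mod_cast h1,
    by exact_mod_cast (by omega : n ≤ N)⟩

lemma totient_div_le_lowerDensity_isCoprime (a : ℕ) :
    (a.totient / a : ℝ) ≤ lowerDensity {y | IsCoprime y (a : ℤ)} := by
  refine le_lowerDensity_of_tendsto (u := fun N => a.totient * (N / a : ℕ))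
    (fun N => by exact_mod_cast totient_mul_div_le_countUpTo_isCoprime a N) ?_
  have hfloor : Tendsto (fun N : ℕ => ((N / a : ℕ) : ℝ) / N) atTop (𝓝 (a : ℝ)⁻¹) := by
    simpa only [Function.comp_def, inv_mul_eq_div, Nat.floor_div_eq_div] using
      (tendsto_nat_floor_mul_div_atTop (inv_nonneg.2 (a.cast_nonneg (α := ℝ)))).comp
        tendsto_natCast_atTop_atTop
  simpa only [mul_div_assoc, div_eq_mul_inv (a.totient : ℝ)] using hfloor.const_mul (a.totient : ℝ)

lemma totient_primorial_div (n : ℕ) :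
    ((primorial n).totient / primorial n : ℝ) =
      ∏ p ∈ (Finset.range (n + 1)).filter Nat.Prime, (1 - 1 / (p : ℝ)) := by
  have hfactors : (primorial n).primeFactors = (Finset.range (n + 1)).filter Nat.Prime :=
    primeFactors_primorial n
  have htotient : ((primorial n).totient : ℝ) =
      primorial n * ∏ p ∈ (primorial n).primeFactors, (1 - (p : ℝ)⁻¹) := by
    simpa using congrArg (Rat.cast : ℚ → ℝ) (Nat.totient_eq_mul_prod_factors (primorial n))
  have hne : (primorial n : ℝ) ≠ 0 := by exact_mod_cast primorial_ne_zero n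
  simp only [htotient, hfactors, one_div, mul_div_cancel_left₀ _ hne]

end Coprime

section DePolignac

lemma AdmissibleTuple.of_isCoprime_primorial {k : ℕ} {x : Fin k → ℤ}
    (hx : ∀ i, IsCoprime (x i) (primorial k : ℤ)) : AdmissibleTuple x := by
  intro p hp
  have : Fact p.Prime := ⟨hp⟩
  rcases le_or_gt p k with hpk | hkp
  · refine ⟨0, fun i hi => (Nat.prime_iff_prime_int.1 hp).not_isUnit ?_⟩
    exact (hx i).isUnit_of_dvd' ((ZMod.intCast_zmod_eq_zero_iff_dvd _ _).1 hi)
      (Int.natCast_dvd_natCast.2 (hp.dvd_primorial_iff.2 hpk))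
  · have hns : ¬ Function.Surjective fun i => (x i : ZMod p) := fun hs =>
      hkp.not_ge (by simpa [ZMod.card] using Fintype.card_le_of_surjective _ hs)
    simpa [Function.Surjective] using hns

lemma dePolignac_sub_iff {a b : ℤ} :
    DePolignac (b - a) ↔ {n : ℤ | Prime (n + a) ∧ Prime (n + b)}.Infinite := by
  have hpreimage : {n : ℤ | Prime (n + a) ∧ Prime (n + b)} =
      (· + a) ⁻¹' {p | Prime p ∧ Prime (p + (b - a))} := by
    ext n
    simp [add_assoc]
  rw [hpreimage]
  exact not_congr ⟨fun h => h.preimage (add_left_injective a).injOn,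
    fun h => h.of_preimage (add_right_surjective a)⟩

lemma dePolignac_zero : DePolignac 0 := by
  refine (Nat.infinite_setOfPred_prime.image (Nat.cast_injective (R := ℤ)).injOn).mono ?_
  rintro _ ⟨p, hp, rfl⟩
  simpa using Nat.prime_iff_prime_int.1 hp

lemma DePolignac.neg {h : ℤ} (hh : DePolignac h) : DePolignac (-h) := by
  rw [← sub_zero h, dePolignac_sub_iff] at hh
  rw [← zero_sub, dePolignac_sub_iff]
  simpa only [and_comm] using hh

end DePolignac

lemma one_div_354_lt_one_div_49_mul_prod :
    (1 / 354 : ℝ) <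
      (1 / 49 : ℝ) * ∏ p ∈ Finset.filter Nat.Prime (Finset.range 51), (1 - 1 / (p : ℝ)) := by
  have hprimes : Finset.filter Nat.Prime (Finset.range 51) =
      {2, 3, 5, 7, 11, 13, 17, 19, 23, 29, 31, 37, 41, 43, 47} := by decide
  rw [hprimes]
  norm_num

theorem stmt_12_general {k : ℕ}
    (hZhang : ∀ x : Fin (k + 1) → ℤ, Function.Injective x → AdmissibleTuple x →
      ∃ i j : Fin (k + 1), i ≠ j ∧ {n : ℤ | Prime (n + x i) ∧ Prime (n + x j)}.Infinite) :
    ∏ p ∈ Finset.filter Nat.Prime (Finset.range (k + 2)), (1 - 1 / (p : ℝ)) ≤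
      k * lowerDensity {h : ℤ | DePolignac h} := by
  rw [← totient_primorial_div (k + 1)]
  refine (totient_div_le_lowerDensity_isCoprime _).trans <|
    lowerDensity_le_mul_of_exists_sub_mem dePolignac_zero (fun _ => DePolignac.neg)
      fun x hinj hcop => ?_
  obtain ⟨i, j, hij, hinf⟩ := hZhang x hinj (.of_isCoprime_primorial hcop)
  exact ⟨j, i, hij.symm, dePolignac_sub_iff.2 hinf⟩

theorem stmt_12
    (hZhang : ∀ x : Fin 50 → ℤ, Function.Injective x → AdmissibleTuple x →
      ∃ i j : Fin 50, i ≠ j ∧ {n : ℤ | Prime (n + x i) ∧ Prime (n + x j)}.Infinite) :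
    (1 / 49 : ℝ) * ∏ p ∈ Finset.filter Nat.Prime (Finset.range 51), (1 - 1 / (p : ℝ)) ≤
        lowerDensity {h : ℤ | DePolignac h} ∧
      (1 / 354 : ℝ) <
        (1 / 49 : ℝ) * ∏ p ∈ Finset.filter Nat.Prime (Finset.range 51), (1 - 1 / (p : ℝ)) := by
  exact ⟨by linarith [stmt_12_general (k := 49) hZhang], one_div_354_lt_one_div_49_mul_prod⟩
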